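/- arXiv:1903.08703 — 2 statements merged into one kernel-verified Lean document; each statement's English description precedes it below -/
import Mathlib

section
/- Let A be a compact metric space and S ⊆ A × A a relation such that for every p ∈ A there exists q ∈ A with (p,q) ∈ S. Then for every ε > 0 there exist a point p ∈ A, an integer ℓ ≥ 1, and a finite chain p = p_0, p_1, …, p_ℓ with (p_i, p_{i+1}) ∈ S for all 0 ≤ i < ℓ, such that dist(p_0, p_ℓ) < ε. -/
open Filter Topology Metric Set

/-! Choosing a successor of each point and iterating gives an infinite orbit. By compactness some
subsequence of it converges, hence is Cauchy, so two of its points with distinct indices are within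
`ε`; the piece of the orbit between them is the desired chain. -/

theorem chain_recurrent_point_of_total_relation {A : Type*} [MetricSpace A] [CompactSpace A]
    [Nonempty A] (S : Set (A × A)) (hS : ∀ p : A, ∃ q : A, (p, q) ∈ S) :
    ∀ ε > 0, ∃ (p : A) (ℓ : ℕ) (c : ℕ → A), 1 ≤ ℓ ∧ c 0 = p ∧
      (∀ i < ℓ, (c i, c (i + 1)) ∈ S) ∧ dist (c 0) (c ℓ) < ε := by
  intro ε hε
  choose f hf using hS
  obtain ⟨a⟩ := ‹Nonempty A›
  obtain ⟨x, φ, hφ, hx⟩ := CompactSpace.tendsto_subseq (fun n => f^[n] a)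
  obtain ⟨N, hN⟩ := Metric.cauchySeq_iff.1 hx.cauchySeq ε hε
  have hlt : φ N < φ (N + 1) := hφ N.lt_succ_self
  refine ⟨f^[φ N] a, φ (N + 1) - φ N, fun i => f^[φ N + i] a, by omega, rfl, fun i _ => ?_, ?_⟩
  · simpa only [← add_assoc, Function.iterate_succ_apply'] using hf (f^[φ N + i] a)
  · simpa [Nat.add_sub_cancel' hlt.le] using hN N le_rfl (N + 1) N.le_succ
end

section
/- Let f̃ be a lift of a torus homeomorphism homotopic to the identity, and let ℓ̃ ⊂ ℝ² be a closed set invariant under translation by a nonzero integer vector (a,b) (ℓ̃ + (a,b) = ℓ̃), whose complement has exactly two unbounded connected components L and R with ℝ² = L ∪ ℓ̃ ∪ R. Suppose f̃(ℓ̃ ∪ cl(R)) ⊆ R (ℓ̃ is a Brouwer line: the right side together with the line is mapped strictly into the right side). If moreover R + (b,−a) ⊆ R, then the rotation set satisfies ρ(f̃) ⊆ {u ∈ ℝ² : ⟨u, (b,−a)⟩ ≥ 0}. -/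
/-!
Write `T = (a, b)`, `w = (b, -a)` and call `⟨z, w⟩` the height of `z`.  The whole argument rests on
one planar crossing fact (`exists_mem_inter_of_unbounded_height`): a connected open set invariant
under `± T` meets every connected open set whose heights are unbounded in both directions.  It is
reduced to the two-dimensional Poincaré–Miranda theorem (`exists_zero_of_signs`) applied to
`(s, t) ↦ α s - β t` for a path `α` in the first set, going from far left to far right, and a path
`β` in the second, going from far below to far above.  Poincaré–Miranda itself follows from the
existence of a continuous logarithm of a nonvanishing function on the plane.

Both `L` and `R` turn out to be invariant under `± T`.  Since `R + w ⊆ R`, the heights of `R` are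
unbounded above, so they are bounded below by some `B₁`: otherwise `R` would meet `L`.  A point `z`
with `F z ∉ R` must lie in `L`; since `F (-n w) = F 0 - n w` is below height `B₁` for large `n`, the
points `-n w` are eventually in `L`.  So the heights of `L` are unbounded below, hence bounded above
by some `B₂`.  A point above height `B₂` is not in `L`, so its iterates under `F` all lie in `R`, above
height `B₁`.  After translating an arbitrary point by a multiple of `w` to a height in
`(B₂, B₂ + |w|²]`, its iterates lose at most `B₂ + |w|² - B₁` in height, a bound independent of the
point and of the number of iterations, and dividing by that number gives the claim.
-/

open Filter Topology Metric Set

/-- The plane, serving as universal cover of the 2-torus. -/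
abbrev R2 := ℝ × ℝ

/-- Euclidean inner product on the plane. -/
noncomputable def dot2 (u v : R2) : ℝ := u.1 * v.1 + u.2 * v.2

/-- A lift of a torus homeomorphism homotopic to the identity: a homeomorphism of the
plane commuting with all integer translations. -/
def TorusLift (F : R2 → R2) : Prop :=
  IsHomeomorph F ∧ ∀ (x : R2) (m n : ℤ), F (x + ((m : ℝ), (n : ℝ))) = F x + ((m : ℝ), (n : ℝ))

/-- The Misiurewicz–Ziemian rotation set of a lift. -/
def rotSet (F : R2 → R2) : Set R2 :=
  {v | ∃ (n : ℕ → ℕ) (z : ℕ → R2), StrictMono n ∧ (∀ k, 1 ≤ n k) ∧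
    Tendsto (fun k => ((n k : ℝ))⁻¹ • (F^[n k] (z k) - z k)) atTop (𝓝 v)}

/-- A vector is totally irrational if it satisfies no nontrivial integer affine relation. -/
def TotallyIrrational (v : R2) : Prop :=
  ∀ a b c : ℤ, (a : ℝ) * v.1 + (b : ℝ) * v.2 + (c : ℝ) = 0 → a = 0 ∧ b = 0 ∧ c = 0

/-- The 2-torus. -/
abbrev T2 := AddCircle (1 : ℝ) × AddCircle (1 : ℝ)

/-- The covering projection from the plane to the torus. -/
noncomputable def proj : R2 → T2 := fun x => ((x.1 : AddCircle (1 : ℝ)), (x.2 : AddCircle (1 : ℝ)))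

/-! ### A planar Poincaré–Miranda theorem -/

/-- An angle that stays off the zeros of `cos (· - φ)` cannot leave the window of half-width `π/2`
around `φ`. -/
lemma angle_window (c : ℝ → ℝ) (hc : Continuous c) (φ : ℝ)
    (hpos : ∀ t, 0 < Real.cos (c t - φ)) {u : ℝ} (hu : |c u - φ| < Real.pi / 2) (v : ℝ) :
    |c v - φ| < Real.pi / 2 := by
  have hpc : IsPreconnected (range c) := isPreconnected_range hc
  have key : ∀ y ∈ range c, Real.cos (y - φ) ≠ 0 := by
    rintro _ ⟨t, rfl⟩
    exact (hpos t).ne'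
  rw [abs_lt] at hu ⊢
  constructor
  · by_contra! h
    refine key _ (hpc.ordConnected.out ⟨v, rfl⟩ ⟨u, rfl⟩
      (show φ - Real.pi / 2 ∈ Icc (c v) (c u) from ⟨by linarith, by linarith⟩)) ?_
    rw [show φ - Real.pi / 2 - φ = -(Real.pi / 2) by ring, Real.cos_neg, Real.cos_pi_div_two]
  · by_contra! h
    refine key _ (hpc.ordConnected.out ⟨u, rfl⟩ ⟨v, rfl⟩
      (show φ + Real.pi / 2 ∈ Icc (c u) (c v) from ⟨by linarith, by linarith⟩)) ?_
    rw [show φ + Real.pi / 2 - φ = Real.pi / 2 by ring, Real.cos_pi_div_two]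

/-- Poincaré–Miranda on the unit square, for a map defined on the whole plane.  If the map had no
zero, a continuous choice of its argument would turn by `2π` along the boundary of the square. -/
lemma exists_zero_of_signs (H : ℝ × ℝ → ℂ) (hH : Continuous H)
    (hleft : ∀ t, (H (0, t)).re < 0) (hright : ∀ t, 0 < (H (1, t)).re)
    (hbot : ∀ s, 0 < (H (s, 0)).im) (htop : ∀ s, (H (s, 1)).im < 0) :
    ∃ p, H p = 0 := by
  by_contra! hne
  obtain ⟨g, ⟨-, hg⟩, -⟩ := Complex.isCoveringMapOn_exp.existsUnique_continuousMap_lifts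
    (⟨H, hH⟩ : C(ℝ × ℝ, ℂ)) (a₀ := (0, 0)) (Complex.exp_log (hne (0, 0))) (fun p => hne p)
  have hexp : ∀ p, Complex.exp (g p) = H p := fun p => congrFun hg p
  have hre : ∀ p, (H p).re = Real.exp (g p).re * Real.cos (g p).im := fun p => by
    rw [← hexp, Complex.exp_re]
  have him : ∀ p, (H p).im = Real.exp (g p).re * Real.sin (g p).im := fun p => by
    rw [← hexp, Complex.exp_im]
  -- Subtracting a multiple of `2π` brings the argument at the corner `(0, 0)` into `(-π, π]`.
  obtain ⟨k, ⟨hk1, hk2⟩, -⟩ := existsUnique_sub_zsmul_mem_Ioc Real.two_pi_pos (g (0, 0)).im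
    (-Real.pi)
  set θ : ℝ × ℝ → ℝ := fun p => (g p).im - k • (2 * Real.pi) with hθ
  have hθc : Continuous θ := by
    have : Continuous fun p => (g p).im := Complex.continuous_im.comp g.continuous
    exact this.sub continuous_const
  have hcos : ∀ p, Real.cos (θ p) = Real.cos (g p).im := fun p => by
    rw [hθ]
    exact Real.cos_periodic.sub_zsmul_eq k
  have hsin : ∀ p, Real.sin (θ p) = Real.sin (g p).im := fun p => by
    rw [hθ]
    exact Real.sin_periodic.sub_zsmul_eq k
  simp only [hre, him, ← hcos, ← hsin, mul_pos_iff_of_pos_left (Real.exp_pos _),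
    mul_neg_iff, Real.exp_pos, not_lt_of_gt (Real.exp_pos _), true_and, false_and, or_false]
    at hleft hright hbot htop
  have hpi := Real.pi_pos
  have h1 : -Real.pi < θ (0, 0) := hk1
  have h2 : θ (0, 0) ≤ Real.pi := by
    have : θ (0, 0) ≤ -Real.pi + 2 * Real.pi := hk2
    linarith
  have h3 : 0 < θ (0, 0) := by
    by_contra! h
    linarith [hbot 0, Real.sin_nonpos_of_nonpos_of_neg_pi_le h h1.le]
  have h3' : θ (0, 0) < Real.pi := by
    refine lt_of_le_of_ne h2 fun h => ?_
    have := hbot 0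
    rw [h, Real.sin_pi] at this
    exact this.false
  have h4 : Real.pi / 2 < θ (0, 0) := by
    by_contra! h
    linarith [hleft 0, Real.cos_nonneg_of_neg_pi_div_two_le_of_le (by linarith) h]
  -- Bottom edge: the argument stays in `(0, π)`.
  have e1 := angle_window (fun s => θ (s, 0)) (by fun_prop) (Real.pi / 2)
    (fun s => by rw [Real.cos_sub_pi_div_two]; exact hbot s) (u := 0)
    (by rw [abs_lt]; constructor <;> linarith) 1
  rw [abs_lt] at e1
  have h5 : θ (1, 0) < Real.pi / 2 := by
    by_contra! h
    linarith [hright 0, Real.cos_nonpos_of_pi_div_two_le_of_le h (by linarith [e1.2])]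
  -- Right edge: the argument stays in `(-π/2, π/2)`.
  have e2 := angle_window (fun t => θ (1, t)) (by fun_prop) 0
    (fun t => by rw [sub_zero]; exact hright t) (u := 0)
    (by rw [abs_lt]; constructor <;> linarith [e1.1]) 1
  rw [abs_lt] at e2
  have h6 : θ (1, 1) < 0 := by
    by_contra! h
    linarith [htop 1, Real.sin_nonneg_of_nonneg_of_le_pi h (by linarith [e2.2])]
  -- Top edge: the argument stays in `(-π, 0)`.
  have e3 := angle_window (fun s => θ (s, 1)) (by fun_prop) (-(Real.pi / 2))
    (fun s => by
      rw [sub_neg_eq_add, Real.cos_add_pi_div_two]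
      linarith [htop s]) (u := 1)
    (by rw [abs_lt]; constructor <;> linarith [e2.1]) 0
  -- Left edge: the argument stays in `(π/2, 3π/2)`, which is incompatible at the last corner.
  have e4 := angle_window (fun t => θ (0, t)) (by fun_prop) Real.pi
    (fun t => by
      rw [Real.cos_sub_pi]
      linarith [hleft t]) (u := 0)
    (by rw [abs_lt]; constructor <;> linarith) 1
  rw [abs_lt] at e3 e4
  linarith [e3.2, e4.1]

/-! ### Crossing of a periodic band and a vertical connected set -/

lemma dot2_add (u v w : R2) : dot2 (u + v) w = dot2 u w + dot2 v w := by
  simp only [dot2, Prod.fst_add, Prod.snd_add]; ring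

lemma dot2_sub (u v w : R2) : dot2 (u - v) w = dot2 u w - dot2 v w := by
  simp only [dot2, Prod.fst_sub, Prod.snd_sub]; ring

lemma dot2_smul (c : ℝ) (u w : R2) : dot2 (c • u) w = c * dot2 u w := by
  simp only [dot2, Prod.smul_fst, Prod.smul_snd, smul_eq_mul]; ring

lemma continuous_dot2 (w : R2) : Continuous fun u => dot2 u w := by
  unfold dot2; fun_prop

/-- A path has bounded coordinates. -/
lemma path_dot2_bounded {x y : R2} (γ : Path x y) (w : R2) :
    ∃ B, ∀ t, |dot2 (γ t) w| ≤ B := by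
  have hc : Continuous fun t => |dot2 (γ t) w| :=
    ((continuous_dot2 w).comp γ.continuous).abs
  obtain ⟨B, hB⟩ := (isCompact_range hc).bddAbove
  exact ⟨B, fun t => hB ⟨t, rfl⟩⟩

/-- The crossing lemma: a connected open set `X` invariant under `± (a, b)` meets every connected
open set `Y` that reaches arbitrarily far in both directions `± (b, -a)`. -/
lemma exists_mem_inter_of_unbounded_height (a b : ℝ) (hab : 0 < a ^ 2 + b ^ 2) (X Y : Set R2)
    (hXo : IsOpen X) (hXc : IsConnected X) (hYo : IsOpen Y) (hYc : IsConnected Y)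
    (hXT : ∀ x ∈ X, x + (a, b) ∈ X) (hXT' : ∀ x ∈ X, x - (a, b) ∈ X)
    (hlow : ∀ B, ∃ p ∈ Y, dot2 p (b, -a) < B) (hhigh : ∀ B, ∃ q ∈ Y, B < dot2 q (b, -a)) :
    ∃ z ∈ X, z ∈ Y := by
  obtain ⟨x, hx⟩ := hXc.nonempty
  have hXp := hXo.isConnected_iff_isPathConnected.1 hXc
  have hYp := hYo.isConnected_iff_isPathConnected.1 hYc
  have hTw : dot2 (a, b) (b, -a) = 0 := by simp only [dot2]; ring
  have hTT : dot2 (a, b) (a, b) = a ^ 2 + b ^ 2 := by simp only [dot2]; ring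
  -- `S` is an invariant piece of `X` of bounded height, in which `x` is joined to its translates.
  obtain ⟨B, hB⟩ := path_dot2_bounded (hXp.joinedIn x hx _ (hXT x hx)).somePath (b, -a)
  set S : Set R2 := X ∩ {z | |dot2 z (b, -a)| ≤ B} with hS
  have hST : ∀ z ∈ S, z + (a, b) ∈ S := fun z hz =>
    ⟨hXT z hz.1, by simpa only [mem_ofPred_eq, dot2_add, hTw, add_zero] using hz.2⟩
  have hST' : ∀ z ∈ S, z - (a, b) ∈ S := fun z hz =>
    ⟨hXT' z hz.1, by simpa only [mem_ofPred_eq, dot2_sub, hTw, sub_zero] using hz.2⟩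
  have hj : JoinedIn S x (x + (a, b)) :=
    ⟨(hXp.joinedIn x hx _ (hXT x hx)).somePath, fun t =>
      ⟨(hXp.joinedIn x hx _ (hXT x hx)).somePath_mem t, hB t⟩⟩
  have hshift : ∀ {z z' : R2}, JoinedIn S z z' → JoinedIn S (z + (a, b)) (z' + (a, b)) :=
    fun h => (h.map (f := fun z => z + ((a, b) : R2)) (by fun_prop)).mono
      (by rintro _ ⟨z, hz, rfl⟩; exact hST z hz)
  have hshift' : ∀ {z z' : R2}, JoinedIn S z z' → JoinedIn S (z - (a, b)) (z' - (a, b)) :=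
    fun h => (h.map (f := fun z => z - ((a, b) : R2)) (by fun_prop)).mono
      (by rintro _ ⟨z, hz, rfl⟩; exact hST' z hz)
  have hright : ∀ n : ℕ, JoinedIn S x (x + (n : ℝ) • ((a, b) : R2)) := by
    intro n
    induction n with
    | zero => simpa using JoinedIn.refl hj.source_mem
    | succ n ih =>
      refine hj.trans ?_
      convert hshift ih using 1
      push_cast
      rw [add_smul, one_smul, add_assoc]
  have hjl : JoinedIn S x (x - (a, b)) := by
    simpa using (hshift' hj).symm
  have hleft : ∀ n : ℕ, JoinedIn S x (x - (n : ℝ) • ((a, b) : R2)) := by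
    intro n
    induction n with
    | zero => simpa using JoinedIn.refl hj.source_mem
    | succ n ih =>
      refine hjl.trans ?_
      convert hshift' ih using 1
      push_cast
      rw [add_smul, one_smul, sub_sub]
  obtain ⟨p, hp, hpB⟩ := hlow (-B)
  obtain ⟨q, hq, hqB⟩ := hhigh B
  have hYj := hYp.joinedIn p hp q hq
  obtain ⟨M, hM⟩ := path_dot2_bounded hYj.somePath (a, b)
  obtain ⟨N, hN⟩ := exists_nat_gt ((M + |dot2 x (a, b)|) / (a ^ 2 + b ^ 2))
  rw [div_lt_iff₀ hab] at hN
  have hαj := (hleft N).symm.trans (hright N)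
  set α := hαj.somePath
  set β := hYj.somePath
  have hα : ∀ s, α.extend s ∈ S := fun s => hαj.somePath_mem _
  have hαB : ∀ s, |dot2 (α.extend s) (b, -a)| ≤ B := fun s => (hα s).2
  have hβ : ∀ t, β.extend t ∈ Y := fun t => hYj.somePath_mem _
  have hβM : ∀ t, |dot2 (β.extend t) (a, b)| ≤ M := fun t => hM _
  obtain ⟨⟨s, t⟩, hst⟩ := exists_zero_of_signs
    (fun r => ⟨dot2 (α.extend r.1 - β.extend r.2) (a, b),
      dot2 (α.extend r.1 - β.extend r.2) (b, -a)⟩)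
    (by
      have h : Continuous fun r : ℝ × ℝ => α.extend r.1 - β.extend r.2 :=
        (α.continuous_extend.comp continuous_fst).sub (β.continuous_extend.comp continuous_snd)
      exact Complex.equivRealProdCLM.symm.continuous.comp
        (((continuous_dot2 (a, b)).comp h).prodMk ((continuous_dot2 (b, -a)).comp h)))
    (fun t => by
      have := abs_le.1 (hβM t)
      simp only [Path.extend_zero, dot2_sub, dot2_smul, hTT]
      linarith [le_abs_self (dot2 x (a, b))])
    (fun t => by
      have := abs_le.1 (hβM t)
      simp only [Path.extend_one, dot2_sub, dot2_add, dot2_smul, hTT]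
      linarith [neg_abs_le (dot2 x (a, b))])
    (fun s => by
      have := abs_le.1 (hαB s)
      simp only [Path.extend_zero, dot2_sub]
      linarith)
    (fun s => by
      have := abs_le.1 (hαB s)
      simp only [Path.extend_one, dot2_sub]
      linarith)
  rw [Complex.ext_iff] at hst
  obtain ⟨h1, h2⟩ := hst
  simp only [dot2, Complex.zero_re, Complex.zero_im] at h1 h2
  set d := α.extend s - β.extend t with hd
  -- The two coordinates of `d` vanish because `(a, b)` and `(b, -a)` form an orthogonal basis.
  have hd1 : d.1 = 0 := by
    have : (a ^ 2 + b ^ 2) * d.1 = 0 := by linear_combination a * h1 + b * h2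
    exact (mul_eq_zero.1 this).resolve_left hab.ne'
  have hd2 : d.2 = 0 := by
    have : (a ^ 2 + b ^ 2) * d.2 = 0 := by linear_combination b * h1 - a * h2
    exact (mul_eq_zero.1 this).resolve_left hab.ne'
  have hd0 : α.extend s = β.extend t := sub_eq_zero.1 (Prod.ext hd1 hd2)
  exact ⟨_, (hα s).1, hd0 ▸ hβ t⟩

/-! ### Dynamics -/

theorem brouwer_line_constrains_rotation_set (F : R2 → R2) (hF : TorusLift F)
    (a b : ℤ) (hab : (a, b) ≠ (0, 0)) (ℓ L R : Set R2)
    (hℓc : IsClosed ℓ) (hinv : (fun x => x + ((a : ℝ), (b : ℝ))) '' ℓ = ℓ)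
    (hLopen : IsOpen L) (hRopen : IsOpen R)
    (hLconn : IsConnected L) (hRconn : IsConnected R)
    (hLunb : ¬ Bornology.IsBounded L) (hRunb : ¬ Bornology.IsBounded R)
    (hLR : Disjoint L R) (hLl : Disjoint L ℓ) (hRl : Disjoint R ℓ)
    (hunion : L ∪ ℓ ∪ R = Set.univ)
    (hBrouwer : ∀ x ∈ ℓ ∪ closure R, F x ∈ R)
    (hdir : ∀ x ∈ R, x + ((b : ℝ), (-a : ℝ)) ∈ R) :
    rotSet F ⊆ {u : R2 | 0 ≤ dot2 u ((b : ℝ), (-a : ℝ))} := by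
  obtain ⟨hFh, hFT⟩ := hF
  have hcases : ∀ z, z ∈ L ∨ z ∈ ℓ ∨ z ∈ R := fun z => by
    have : z ∈ L ∪ ℓ ∪ R := hunion ▸ mem_univ z
    rcases this with (h | h) | h <;> simp [h]
  have hFt : ∀ (x : R2) (k : ℤ), F (x + (k : ℝ) • ((a : ℝ), (b : ℝ)))
      = F x + (k : ℝ) • ((a : ℝ), (b : ℝ)) := fun x k => by
    have := hFT x (k * a) (k * b)
    push_cast at this
    exact this
  have hFw : ∀ (x : R2) (k : ℤ), F (x + (k : ℝ) • ((b : ℝ), (-a : ℝ)))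
      = F x + (k : ℝ) • ((b : ℝ), (-a : ℝ)) := fun x k => by
    have := hFT x (k * b) (k * -a)
    push_cast at this
    exact this
  set T : R2 := ((a : ℝ), (b : ℝ)) with hT
  set w : R2 := ((b : ℝ), (-a : ℝ)) with hw
  have hW : (0 : ℝ) < (a : ℝ) ^ 2 + (b : ℝ) ^ 2 := by
    by_contra! h
    have ha : (a : ℝ) = 0 := by nlinarith [sq_nonneg (a : ℝ), sq_nonneg (b : ℝ)]
    have hb : (b : ℝ) = 0 := by nlinarith [sq_nonneg (a : ℝ), sq_nonneg (b : ℝ)]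
    exact hab (by rw [Int.cast_eq_zero.1 ha, Int.cast_eq_zero.1 hb])
  have hww : dot2 w w = (a : ℝ) ^ 2 + (b : ℝ) ^ 2 := by simp only [hw, dot2]; ring
  set W : ℝ := (a : ℝ) ^ 2 + (b : ℝ) ^ 2
  have hℓadd : ∀ z, z + T ∈ ℓ ↔ z ∈ ℓ := fun z => by
    constructor
    · intro h
      rw [← hinv] at h
      obtain ⟨y, hy, hyz⟩ := h
      rwa [← add_right_cancel hyz]
    · intro h
      rw [← hinv]
      exact ⟨z, h, rfl⟩
  have hFadd : ∀ z, F (z + T) = F z + T := fun z => by simpa using hFt z 1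
  have hFsub : ∀ z, F (z - T) = F z - T := fun z => by
    simpa [sub_eq_add_neg] using hFt z (-1)
  -- `ℓ` is nonempty since the plane is connected.
  obtain ⟨p, hp⟩ : ℓ.Nonempty := by
    rw [nonempty_iff_ne_empty]
    intro h
    obtain ⟨x, hx⟩ := hLconn.nonempty
    obtain ⟨y, hy⟩ := hRconn.nonempty
    have huniv : (univ : Set R2) ⊆ L ∪ R := by
      rw [← hunion, h, union_empty]
    have := isPreconnected_univ.subset_left_of_subset_union hLopen hRopen hLR huniv
      ⟨x, mem_univ x, hx⟩
    exact hLR.le_bot ⟨this (mem_univ y), hy⟩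
  -- Translation by `± T` preserves `R`; it cannot exchange the sides, by looking at `F p`.
  have hRinv : ∀ T' : R2, (∀ z, z + T' ∈ ℓ ↔ z ∈ ℓ) → (∀ z, F (z + T') = F z + T') →
      ∀ z ∈ R, z + T' ∈ R := by
    intro T' hℓ' hF' z hz
    have hsub : (fun z => z + T') '' R ⊆ R ∪ L := by
      rintro _ ⟨y, hy, rfl⟩
      rcases hcases (y + T') with h | h | h
      · exact Or.inr h
      · exact absurd ((hℓ' y).1 h) fun h => hRl.le_bot ⟨hy, h⟩
      · exact Or.inl h
    have hFp : F p + T' ∈ R := by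
      rw [← hF']
      exact hBrouwer _ (Or.inl ((hℓ' p).2 hp))
    exact (hRconn.isPreconnected.image _ (by fun_prop)).subset_left_of_subset_union
      hRopen hLopen hLR.symm hsub ⟨_, ⟨F p, hBrouwer p (Or.inl hp), rfl⟩, hFp⟩ ⟨z, hz, rfl⟩
  have hℓsub : ∀ z, z + -T ∈ ℓ ↔ z ∈ ℓ := fun z => by
    rw [← hℓadd (z + -T), neg_add_cancel_right]
  have hRT : ∀ z ∈ R, z + T ∈ R := hRinv T hℓadd hFadd
  have hRT' : ∀ z ∈ R, z - T ∈ R := fun z hz => by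
    rw [sub_eq_add_neg]
    exact hRinv (-T) hℓsub (fun z => by simpa [sub_eq_add_neg] using hFsub z) z hz
  have hLT : ∀ z ∈ L, z + T ∈ L := fun z hz => by
    rcases hcases (z + T) with h | h | h
    · exact h
    · exact absurd ⟨hz, (hℓadd z).1 h⟩ fun h => hLl.le_bot h
    · have := hRT' _ h
      rw [add_sub_cancel_right] at this
      exact absurd ⟨hz, this⟩ fun h => hLR.le_bot h
  have hLT' : ∀ z ∈ L, z - T ∈ L := fun z hz => by
    rcases hcases (z - T) with h | h | h
    · exact h
    · have := (hℓadd _).2 h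
      rw [sub_add_cancel] at this
      exact absurd ⟨hz, this⟩ fun h => hLl.le_bot h
    · have := hRT _ h
      rw [sub_add_cancel] at this
      exact absurd ⟨hz, this⟩ fun h => hLR.le_bot h
  have hRw : ∀ z ∈ R, ∀ n : ℕ, z + (n : ℝ) • w ∈ R := by
    intro z hz n
    induction n with
    | zero => simpa using hz
    | succ n ih =>
      have := hdir _ ih
      push_cast
      rwa [add_smul, one_smul, ← add_assoc]
  -- `R` has a lowest height.
  obtain ⟨B₁, hB₁⟩ : ∃ B, ∀ z ∈ R, B ≤ dot2 z w := by
    by_contra! hlow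
    obtain ⟨z, hzL, hzR⟩ := exists_mem_inter_of_unbounded_height a b hW L R hLopen hLconn
      hRopen hRconn hLT hLT' hlow (fun B => by
        obtain ⟨r, hr⟩ := hRconn.nonempty
        obtain ⟨n, hn⟩ := exists_nat_gt ((B - dot2 r w) / W)
        rw [div_lt_iff₀ hW] at hn
        refine ⟨_, hRw r hr n, ?_⟩
        change B < dot2 (r + (n : ℝ) • w) w
        rw [dot2_add, dot2_smul, hww]
        linarith)
    exact hLR.le_bot ⟨hzL, hzR⟩
  have hnotL : ∀ z, z ∉ L → F z ∈ R := fun z hz => by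
    rcases hcases z with h | h | h
    · exact absurd h hz
    · exact hBrouwer z (Or.inl h)
    · exact hBrouwer z (Or.inr (subset_closure h))
  -- `L` has a highest height.
  obtain ⟨B₂, hB₂⟩ : ∃ B, ∀ z ∈ L, dot2 z w ≤ B := by
    by_contra! hhigh
    obtain ⟨z, hzR, hzL⟩ := exists_mem_inter_of_unbounded_height a b hW R L hRopen hRconn
      hLopen hLconn hRT hRT' (fun B => by
        -- Both `-n w` and its image are low for large `n`; a low image forces `-n w ∈ L`.
        obtain ⟨n, hn⟩ := exists_nat_gt (max ((dot2 (0 : R2) w - B) / W)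
          ((dot2 (F 0) w - B₁) / W))
        rw [max_lt_iff, div_lt_iff₀ hW, div_lt_iff₀ hW] at hn
        have hFn := hFw 0 (-(n : ℤ))
        push_cast at hFn
        refine ⟨0 + (-(n : ℝ)) • w, ?_, ?_⟩
        · by_contra h
          have := hB₁ _ (hnotL _ h)
          rw [hFn, dot2_add, dot2_smul, hww] at this
          linarith [hn.2]
        · change dot2 (0 + (-(n : ℝ)) • w) w < B
          rw [dot2_add, dot2_smul, hww]
          linarith [hn.1])
      hhigh
    exact hLR.le_bot ⟨hzL, hzR⟩
  have hiterR : ∀ z, B₂ < dot2 z w → ∀ n : ℕ, 1 ≤ n → F^[n] z ∈ R := by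
    intro z hz n hn
    induction n, hn using Nat.le_induction with
    | base => exact hnotL z fun h => (hB₂ z h).not_gt hz
    | succ n _ ih =>
      rw [Function.iterate_succ_apply']
      exact hBrouwer _ (Or.inr (subset_closure ih))
  have hiterw : ∀ (n : ℕ) (z : R2) (k : ℤ), F^[n] (z + (k : ℝ) • w) = F^[n] z + (k : ℝ) • w := by
    intro n z k
    induction n with
    | zero => rfl
    | succ n ih => rw [Function.iterate_succ_apply', ih, hFw, Function.iterate_succ_apply']
  -- Iterates lose a bounded amount of height, uniformly in the point and the time.
  have hbound : ∀ (n : ℕ) (z : R2), 1 ≤ n → B₁ - B₂ - W ≤ dot2 (F^[n] z - z) w := by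
    intro n z hn
    obtain ⟨k, ⟨hk1, hk2⟩, -⟩ := existsUnique_add_zsmul_mem_Ioc hW (dot2 z w) B₂
    rw [zsmul_eq_mul] at hk1 hk2
    have hz : dot2 (z + (k : ℝ) • w) w = dot2 z w + k * W := by
      rw [dot2_add, dot2_smul, hww]
    have := hB₁ _ (hiterR (z + (k : ℝ) • w) (by rw [hz]; exact hk1) n hn)
    rw [hiterw, dot2_add, dot2_smul, hww] at this
    rw [dot2_sub]
    linarith
  rintro v ⟨n, z, hn, hn1, hlim⟩
  have h1 : Tendsto (fun k => dot2 ((n k : ℝ)⁻¹ • (F^[n k] (z k) - z k)) w) atTop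
      (𝓝 (dot2 v w)) := ((continuous_dot2 w).tendsto v).comp hlim
  have h2 : Tendsto (fun k => (n k : ℝ)⁻¹ * (B₁ - B₂ - W)) atTop (𝓝 0) := by
    have : Tendsto (fun k => (n k : ℝ)⁻¹) atTop (𝓝 0) :=
      tendsto_inv_atTop_zero.comp (tendsto_natCast_atTop_atTop.comp hn.tendsto_atTop)
    simpa using this.mul_const (B₁ - B₂ - W)
  refine le_of_tendsto_of_tendsto' h2 h1 fun k => ?_
  rw [dot2_smul]
  exact mul_le_mul_of_nonneg_left (hbound _ _ (hn1 k)) (by positivity)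
end
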